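/- Let A be a complex algebra equipped with a linear functional φ : A → ℂ, and let A₁, A₂ ⊆ A be two subalgebras such that A₁ is monotone independent from A₂ with respect to φ. Then T₀(A₁) and T₀(A₂) are cyclically monotone independent subalgebras of the augmentation ideal of T(A) with respect to (φ, [φ]). -/

import Mathlib

open scoped BigOperators

namespace NCProb

variable {A : Type*} [Ring A] [Algebra ℂ A]

/-- Ordered sublist of the tuple `a` on the indices satisfying `P`. -/
noncomputable def ordList {n : ℕ} (a : Fin n → A) (P : Fin n → Prop) [DecidablePred P] :
    List A :=
  ((List.finRange n).filter fun i => decide (P i)).map a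

/-- `(a, j)` is an alternating sequence for the pair of sets `(S₁, S₂)`:
`a i ∈ S₁` when `j i = false`, `a i ∈ S₂` when `j i = true`, and consecutive labels differ. -/
def Alternates {n : ℕ} (S₁ S₂ : Set A) (a : Fin n → A) (j : Fin n → Bool) : Prop :=
  (∀ i, a i ∈ (if j i then S₂ else S₁)) ∧
    ∀ (i : ℕ) (h : i + 1 < n), j ⟨i, Nat.lt_of_succ_lt h⟩ ≠ j ⟨i + 1, h⟩

def IsTracial (ω : A →ₗ[ℂ] ℂ) : Prop := ∀ a b : A, ω (a * b) = ω (b * a)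

/-- Freeness of a pair of subalgebras (given as sets) with respect to `Ψ`. -/
def IsFree (Ψ : A →ₗ[ℂ] ℂ) (S₁ S₂ : Set A) : Prop :=
  ∀ (n : ℕ) (a : Fin n → A) (j : Fin n → Bool),
    Alternates S₁ S₂ a j → (∀ i, Ψ (a i) = 0) → Ψ (List.ofFn a).prod = 0

/-- Conditional freeness with respect to the pair `(Ψ, φ)`. -/
def IsCondFree (Ψ φ : A →ₗ[ℂ] ℂ) (S₁ S₂ : Set A) : Prop :=
  ∀ (n : ℕ) (a : Fin n → A) (j : Fin n → Bool),
    Alternates S₁ S₂ a j → (∀ i, Ψ (a i) = 0) →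
      Ψ (List.ofFn a).prod = 0 ∧ φ (List.ofFn a).prod = ∏ i, φ (a i)

/-- Cyclic freeness with respect to the pair `(Ψ, ω)`. -/
def IsCyclicallyFree (Ψ ω : A →ₗ[ℂ] ℂ) (S₁ S₂ : Set A) : Prop :=
  IsFree Ψ S₁ S₂ ∧
    ∀ (n : ℕ) (a : Fin n → A) (j : Fin n → Bool) (hn : 2 ≤ n),
      Alternates S₁ S₂ a j →
      j ⟨0, by omega⟩ ≠ j ⟨n - 1, by omega⟩ →
      (∀ i, Ψ (a i) = 0) → ω (List.ofFn a).prod = 0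

/-- Infinitesimal freeness with respect to the pair `(Ψ, ω)`. -/
def IsInfFree (Ψ ω : A →ₗ[ℂ] ℂ) (S₁ S₂ : Set A) : Prop :=
  ∀ (n : ℕ) (a : Fin n → A) (j : Fin n → Bool),
    Alternates S₁ S₂ a j → (∀ i, Ψ (a i) = 0) →
      Ψ (List.ofFn a).prod = 0 ∧
      ω (List.ofFn a).prod = ∑ i : Fin n, ω (a i) * Ψ (ordList a fun k => k ≠ i).prod

/-- Cyclic-conditional freeness with respect to the triple `(Ψ, φ, ω)`. -/
def IsCycCondFree (Ψ φ ω : A →ₗ[ℂ] ℂ) (S₁ S₂ : Set A) : Prop :=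
  IsCondFree Ψ φ S₁ S₂ ∧
    ∀ (n : ℕ) (a : Fin n → A) (j : Fin n → Bool) (hn : 2 ≤ n),
      Alternates S₁ S₂ a j →
      j ⟨0, by omega⟩ ≠ j ⟨n - 1, by omega⟩ →
      (∀ i, Ψ (a i) = 0) → ω (List.ofFn a).prod = ∏ i, φ (a i)

/-- Boolean cumulants (with explicit fuel), via the standard recursion
`φ(a₁⋯aₙ) = Σ_{k=1}^{n} β_k(a₁,…,a_k)·φ(a_{k+1}⋯aₙ)`. -/
noncomputable def booleanAux (φ : A →ₗ[ℂ] ℂ) : ℕ → List A → ℂ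
  | 0, _ => 0
  | fuel + 1, l =>
      φ l.prod - ∑ k ∈ Finset.range (l.length - 1),
        booleanAux φ fuel (l.take (k + 1)) * φ (l.drop (k + 1)).prod

/-- The Boolean cumulant `β^φ(a₁,…,aₙ)` of the entries of the list `l = [a₁,…,aₙ]`. -/
noncomputable def booleanCumulant (φ : A →ₗ[ℂ] ℂ) (l : List A) : ℂ :=
  booleanAux φ l.length l

/-- Product of the `Ψ`-moments of the gaps between consecutive elements of `V`. -/
noncomputable def gapFactor {n : ℕ} (Ψ : A →ₗ[ℂ] ℂ) (a : Fin n → A) (V : Finset (Fin n)) : ℂ :=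
  (((V.sort (· ≤ ·)).zip (V.sort (· ≤ ·)).tail).map fun p =>
      Ψ (ordList a fun i => p.1 < i ∧ i < p.2).prod).prod

noncomputable def headProd {n : ℕ} (a : Fin n → A) (V : Finset (Fin n)) : A :=
  (ordList a fun i => ∀ v ∈ V, i < v).prod

noncomputable def tailProd {n : ℕ} (a : Fin n → A) (V : Finset (Fin n)) : A :=
  (ordList a fun i => ∀ v ∈ V, v < i).prod

/-- Cumulants with respect to `(Ψ, θ)` with explicit fuel, defined through the
moment-cumulant recursion obtained by singling out the distinguished block `V`:
mode 0: free cumulants (`θ = Ψ`, the block `V` contains the first letter);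
mode 1: infinitesimal free cumulants (wrap gap read in linear order `head·tail`);
mode 2: cyclic free cumulants (wrap gap read in cyclic order `tail·head`). -/
noncomputable def cumulAux (Ψ θ : A →ₗ[ℂ] ℂ) (mode : ℕ) : ℕ → List A → ℂ
  | 0, _ => 0
  | fuel + 1, l =>
      θ l.prod - ∑ V : Finset (Fin l.length),
        if V.Nonempty ∧ V ≠ Finset.univ ∧ (mode ≠ 0 ∨ ∃ v ∈ V, (v : ℕ) = 0) then
          cumulAux Ψ θ mode fuel ((V.sort (· ≤ ·)).map l.get) *
            Ψ (if mode = 2 then tailProd l.get V * headProd l.get V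
               else headProd l.get V * tailProd l.get V) *
            gapFactor Ψ l.get V
        else 0

/-- The free cumulant `κ^Ψ_n(a₁,…,aₙ)`. -/
noncomputable def freeCumulant (Ψ : A →ₗ[ℂ] ℂ) (l : List A) : ℂ :=
  cumulAux Ψ Ψ 0 l.length l

/-- The infinitesimal free cumulant `∂κ^Ψ_n(a₁,…,aₙ)` of the pair `(Ψ, dΨ)`. -/
noncomputable def infCumulant (Ψ dΨ : A →ₗ[ℂ] ℂ) (l : List A) : ℂ :=
  cumulAux Ψ dΨ 1 l.length l

/-- The cyclic free cumulant `Dκ^Ψ_n(a₁,…,aₙ)` of the pair `(Ψ, dΨ)`. -/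
noncomputable def cycCumulant (Ψ dΨ : A →ₗ[ℂ] ℂ) (l : List A) : ℂ :=
  cumulAux Ψ dΨ 2 l.length l

/-- Vanishing of mixed cumulants: `f` vanishes on mixed tuples from `S₁ ∪ S₂`. -/
def MixedVanishes (f : List A → ℂ) (S₁ S₂ : Set A) : Prop :=
  ∀ (n : ℕ) (a : Fin n → A), 2 ≤ n → (∀ i, a i ∈ S₁ ∪ S₂) →
    (∃ k, a k ∈ S₁) → (∃ l, a l ∈ S₂) → f (List.ofFn a) = 0

/-- The value `[φ](a₁ ⊗ ⋯ ⊗ aₙ) = Σ_{1≤i₁<…<i_ℓ≤n} ∏_k β^φ`(cyclic pieces)`. -/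
noncomputable def mkValue (φ : A →ₗ[ℂ] ℂ) {n : ℕ} (a : Fin n → A) : ℂ :=
  ∑ V : Finset (Fin n),
    if V.Nonempty then
      (((V.sort (· ≤ ·)).zip (V.sort (· ≤ ·)).tail).map fun p =>
          booleanCumulant φ (ordList a fun i => p.1 ≤ i ∧ i < p.2)).prod *
        booleanCumulant φ
          ((ordList a fun i => ∀ v ∈ V, v ≤ i) ++ ordList a fun i => ∀ v ∈ V, i < v)
    else 0

/-- Non-crossing partitions of `{1,…,n}` encoded as finsets of blocks. -/
def IsNCPartition {n : ℕ} (P : Finset (Finset (Fin n))) : Prop :=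
  (∀ B ∈ P, B.Nonempty) ∧
    (∀ i : Fin n, ∃! B, B ∈ P ∧ i ∈ B) ∧
    ∀ B₁ ∈ P, ∀ B₂ ∈ P, ∀ p ∈ B₁, ∀ r ∈ B₁, ∀ q ∈ B₂, ∀ s ∈ B₂,
      p < q → q < r → r < s → B₁ = B₂

open scoped Classical in
/-- The value `⌞Ψ⌟(a₁⊗⋯⊗aₙ) = Σ_{π ∈ NC(n)} (n+1-|π|)·κ^Ψ_π(a₁,…,aₙ)`. -/
noncomputable def lsoulValue (Ψ : A →ₗ[ℂ] ℂ) {n : ℕ} (a : Fin n → A) : ℂ :=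
  ∑ P : Finset (Finset (Fin n)),
    if IsNCPartition P then
      ((n : ℂ) + 1 - P.card) * ∏ B ∈ P, freeCumulant Ψ ((B.sort (· ≤ ·)).map a)
    else 0

/-- `F` extends the linear functional `f` from `A` to the tensor algebra `T(A)`:
`F(a₁ ⊗ ⋯ ⊗ aₙ) = f(a₁⋯aₙ)`. -/
def ExtendsTo (f : A →ₗ[ℂ] ℂ) (F : TensorAlgebra ℂ A →ₗ[ℂ] ℂ) : Prop :=
  ∀ l : List A, l ≠ [] → F (l.map fun x => TensorAlgebra.ι ℂ x).prod = f l.prod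


/-- `S₁` is monotone independent from `S₂` with respect to `φ`: in any alternating
sequence, an element of `S₂` (which is automatically a peak) can be pulled out. -/
def IsMonotoneIndep {A : Type*} [Ring A] [Algebra ℂ A]
    (φ : A →ₗ[ℂ] ℂ) (S₁ S₂ : Set A) : Prop :=
  ∀ (n : ℕ) (a : Fin n → A) (j : Fin n → Bool),
    Alternates S₁ S₂ a j → ∀ p : Fin n, j p = true →
      φ (List.ofFn a).prod = φ (a p) * φ (ordList a fun i => i ≠ p).prod

/-- Cyclic monotone independence with respect to the pair `(φ, ω)`. -/
def IsCycMonotoneIndep {A : Type*} [Ring A] [Algebra ℂ A]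
    (φ ω : A →ₗ[ℂ] ℂ) (S₁ S₂ : Set A) : Prop :=
  IsMonotoneIndep φ S₁ S₂ ∧
    ∀ (n : ℕ) (av : Fin n → A) (bv : Fin (n + 1) → A), 1 ≤ n →
      (∀ i, av i ∈ S₁) → (∀ i, bv i ∈ S₂) →
      ω (bv 0 * (List.ofFn fun i : Fin n => av i * bv i.succ).prod) =
        ω (List.ofFn av).prod *
          (∏ i : Fin (n + 1), if 0 < (i : ℕ) ∧ (i : ℕ) < n then φ (bv i) else 1) *
          φ (bv (Fin.last n) * bv 0)

/-!
Let `M` be the moment function of `φ` on words, `β` its Boolean cumulants and `δ` the unit of the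
deconcatenation convolution. The recursion for `β` says that `N = δ - β` is the convolution inverse
of `M`. Fixing the piece of a cyclic word that runs across its end and summing over all other cuts
turns the remaining product of Boolean cumulants into a moment, so that `[φ]` becomes a sum of
`β(arc) M(rest)`, and `M * N = δ` turns it into the sum of `M(arc) N(rest)` over cyclic arcs. In
this form only moments and the identities `M * N = N * M = δ` are left: they give traciality, and
for a word `x b` with `x` starting and ending in `A₁` and `b` in `A₂`, the arcs that start
inside `b` contribute a multiple of `(M * N)(x u) = 0`, while in all the others `b` is a peak from
which `M b` factors out. Hence `[φ](x b) = φ(b) [φ](x)`, and rotating one peak after another to the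
end gives the cyclic formula.
-/

/-! ### Sums over deconcatenations and cyclic arcs -/

section SplitSum

variable {α R : Type*}

/-- The sum of `f u v` over all deconcatenations `l = u ++ v`. -/
def splitSum [AddCommMonoid R] (f : List α → List α → R) (l : List α) : R :=
  ∑ k ∈ Finset.range (l.length + 1), f (l.take k) (l.drop k)

/-- The sum of `f u v` over the deconcatenations `l = u ++ v` with `v` nonempty. -/
def properSplitSum [AddCommMonoid R] (f : List α → List α → R) (l : List α) : R :=
  ∑ k ∈ Finset.range l.length, f (l.take k) (l.drop k)

section AddCommMonoid

variable [AddCommMonoid R]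

theorem splitSum_eq_properSplitSum_add (f : List α → List α → R) (l : List α) :
    splitSum f l = properSplitSum f l + f l [] := by
  simp [splitSum, properSplitSum, Finset.sum_range_succ]

@[simp]
theorem splitSum_nil (f : List α → List α → R) : splitSum f [] = f [] [] := by
  simp [splitSum]

@[simp]
theorem properSplitSum_nil (f : List α → List α → R) : properSplitSum f [] = 0 := rfl

theorem splitSum_cons (f : List α → List α → R) (a : α) (l : List α) :
    splitSum f (a :: l) = f [] (a :: l) + splitSum (fun u v => f (a :: u) v) l := by
  rw [splitSum, splitSum, List.length_cons, Finset.sum_range_succ', add_comm]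
  rfl

theorem properSplitSum_cons (f : List α → List α → R) (a : α) (l : List α) :
    properSplitSum f (a :: l) = f [] (a :: l) + properSplitSum (fun u v => f (a :: u) v) l := by
  simp [properSplitSum, Finset.sum_range_succ', add_comm]

theorem properSplitSum_congr {f g : List α → List α → R} {l : List α}
    (h : ∀ u v, u ++ v = l → v ≠ [] → f u v = g u v) : properSplitSum f l = properSplitSum g l :=
  Finset.sum_congr rfl fun k hk => h _ _ (List.take_append_drop k l)
    (by simpa using hk)

theorem splitSum_congr {f g : List α → List α → R} {l : List α}
    (h : ∀ u v, u ++ v = l → f u v = g u v) : splitSum f l = splitSum g l :=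
  Finset.sum_congr rfl fun k _ => h _ _ (List.take_append_drop k l)

theorem properSplitSum_eq_zero {f : List α → List α → R} {l : List α}
    (h : ∀ u v, u ++ v = l → v ≠ [] → f u v = 0) : properSplitSum f l = 0 :=
  (properSplitSum_congr h).trans Finset.sum_const_zero

theorem properSplitSum_add (f g : List α → List α → R) (l : List α) :
    properSplitSum (fun u v => f u v + g u v) l = properSplitSum f l + properSplitSum g l :=
  Finset.sum_add_distrib

theorem properSplitSum_append (f : List α → List α → R) (x y : List α) :
    properSplitSum f (x ++ y) =
      properSplitSum (fun u v => f u (v ++ y)) x + properSplitSum (fun u v => f (x ++ u) v) y := by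
  induction x generalizing f with
  | nil => simp
  | cons a x ih => simp [properSplitSum_cons, ih, add_assoc]

theorem splitSum_append (f : List α → List α → R) (x y : List α) :
    splitSum f (x ++ y) =
      properSplitSum (fun u v => f u (v ++ y)) x + splitSum (fun u v => f (x ++ u) v) y := by
  simp only [splitSum_eq_properSplitSum_add, properSplitSum_append, add_assoc]

theorem properSplitSum_assoc (f : List α → List α → List α → R) (l : List α) :
    properSplitSum (fun x y => properSplitSum (f x) y) l =
      properSplitSum (fun w v => splitSum (fun x u => f x u v) w) l := by
  induction l generalizing f with
  | nil => rfl
  | cons a l ih =>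
    simp only [properSplitSum_cons, splitSum_cons, properSplitSum_add, ih, splitSum_nil, add_assoc]

theorem splitSum_assoc (f : List α → List α → List α → R) (l : List α) :
    splitSum (fun x y => splitSum (f x) y) l =
      splitSum (fun w v => splitSum (fun x u => f x u v) w) l := by
  simp only [splitSum_eq_properSplitSum_add, properSplitSum_add, properSplitSum_nil, zero_add,
    properSplitSum_assoc, add_assoc]

end AddCommMonoid

theorem mul_splitSum [NonUnitalNonAssocSemiring R] (c : R) (f : List α → List α → R)
    (l : List α) : c * splitSum f l = splitSum (fun u v => c * f u v) l :=
  Finset.mul_sum _ _ _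

theorem splitSum_mul [NonUnitalNonAssocSemiring R] (c : R) (f : List α → List α → R)
    (l : List α) : splitSum f l * c = splitSum (fun u v => f u v * c) l :=
  Finset.sum_mul _ _ _

theorem mul_properSplitSum [NonUnitalNonAssocSemiring R] (c : R) (f : List α → List α → R)
    (l : List α) : c * properSplitSum f l = properSplitSum (fun u v => c * f u v) l :=
  Finset.mul_sum _ _ _

end SplitSum

section WordConvolution

variable {α R : Type*} [CommRing R]

/-- The convolution product of functions on words which is dual to deconcatenation. -/
def wordConv (F G : List α → R) (l : List α) : R :=
  splitSum (fun u v => F u * G v) l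

/-- The sum of `F arc * G rest` over the arcs of the cyclic word `l` which contain its last
letter: for `l = h ++ v ++ t` with `t` nonempty, the arc `t ++ h` crosses the end of `l`. -/
def cyclicSum (F G : List α → R) (l : List α) : R :=
  properSplitSum (fun u t => splitSum (fun h v => F (t ++ h) * G v) u) l

theorem cyclicSum_add_swap (F G : List α → R) (l : List α) :
    cyclicSum F G l + cyclicSum G F l = properSplitSum (fun x y => wordConv F G (y ++ x)) l := by
  simp only [wordConv, splitSum_append, properSplitSum_add, properSplitSum_assoc]
  simp only [cyclicSum, mul_comm, add_comm]

theorem cyclicSum_cons_sub_append_singleton (F G : List α → R) (a : α) (l : List α) :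
    cyclicSum F G (a :: l) - cyclicSum F G (l ++ [a]) =
      wordConv G F (a :: l) - wordConv F G (a :: l) := by
  simp only [cyclicSum, wordConv, properSplitSum_append, properSplitSum_cons, splitSum_cons,
    properSplitSum_add, splitSum_eq_properSplitSum_add _ l, List.append_assoc, List.cons_append,
    List.nil_append, List.append_nil, splitSum_nil, properSplitSum_nil, mul_comm (F _)]
  ring

/-- `M` is the moment function with Boolean cumulants `f`: the value of `M` at a word is the sum
over all its factorizations into nonempty words of the products of the values of `f`. -/
structure HasBooleanCumulants (M f : List α → R) : Prop where
  nil : M [] = 1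
  cons (a : α) (l : List α) : M (a :: l) = splitSum (fun u v => f (a :: u) * M v) l

/-- The function `δ - f` on words, where `δ` is the unit of `wordConv` and the value of `f` at the
empty word is disregarded. -/
def oneSub (f : List α → R) : List α → R
  | [] => 1
  | a :: l => -f (a :: l)

theorem oneSub_of_ne_nil (f : List α → R) {l : List α} (hl : l ≠ []) : oneSub f l = -f l := by
  cases l with
  | nil => contradiction
  | cons a l => rfl

theorem cyclicSum_oneSub_left (f G : List α → R) (l : List α) :
    cyclicSum (oneSub f) G l = -cyclicSum f G l := by
  rw [cyclicSum, cyclicSum, neg_eq_neg_one_mul, mul_properSplitSum]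
  refine properSplitSum_congr fun u t _ ht => ?_
  rw [mul_splitSum]
  simp [oneSub_of_ne_nil, ht]

namespace HasBooleanCumulants

variable {M f : List α → R}

theorem oneSub_wordConv (h : HasBooleanCumulants M f) {l : List α} (hl : l ≠ []) :
    wordConv (oneSub f) M l = 0 := by
  obtain ⟨a, l, rfl⟩ := List.exists_cons_of_ne_nil hl
  have hneg : splitSum (fun u v => oneSub f (a :: u) * M v) l = -M (a :: l) := by
    rw [h.cons, neg_eq_neg_one_mul, mul_splitSum]
    simp [oneSub]
  rw [wordConv, splitSum_cons, hneg]
  simp [oneSub]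

theorem wordConv_oneSub (h : HasBooleanCumulants M f) {l : List α} (hl : l ≠ []) :
    wordConv M (oneSub f) l = 0 := by
  induction hn : l.length using Nat.strong_induction_on generalizing l with
  | _ n ih =>
  obtain ⟨a, l, rfl⟩ := List.exists_cons_of_ne_nil hl
  have hassoc : splitSum (fun u v => M (a :: u) * oneSub f v) l =
      splitSum (fun u w => f (a :: u) * wordConv M (oneSub f) w) l := by
    simp only [h.cons, wordConv, splitSum_mul, mul_splitSum, splitSum_assoc, mul_assoc]
  have hvanish : properSplitSum (fun u w => f (a :: u) * wordConv M (oneSub f) w) l = 0 :=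
    properSplitSum_eq_zero fun u w huw hw => by
      rw [ih w.length (by simp [← hn, ← huw]) hw rfl, mul_zero]
  rw [wordConv, splitSum_cons, hassoc, splitSum_eq_properSplitSum_add, hvanish]
  simp [wordConv, h.nil, oneSub]

theorem cyclicSum_append_comm (h : HasBooleanCumulants M f) (x y : List α) :
    cyclicSum M (oneSub f) (x ++ y) = cyclicSum M (oneSub f) (y ++ x) := by
  induction x generalizing y with
  | nil => simp
  | cons a x ih =>
    have hrotate := cyclicSum_cons_sub_append_singleton M (oneSub f) a (x ++ y)
    rw [h.oneSub_wordConv (by simp), h.wordConv_oneSub (by simp), sub_self, sub_eq_zero] at hrotate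
    rw [List.cons_append, hrotate, List.append_assoc, ih]
    simp

theorem cyclicSum_append_peak (h : HasBooleanCumulants M f) {x b : List α} (hx : x ≠ [])
    (hcut : ∀ u e, u ++ e = b → ∀ k v, k ++ v = x ++ u → M (e ++ k) = M e * M k)
    (hpeak : ∀ k v t, k ++ v ++ t = x → M (t ++ (b ++ k)) = M b * M (t ++ k)) :
    cyclicSum M (oneSub f) (x ++ b) = M b * cyclicSum M (oneSub f) x := by
  -- An arc that starts inside `b` splits off the factor `M e`, and the sum over the remaining
  -- lengths of the arc is a value of `M * (δ - f) = 0`.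
  have hcut_zero : properSplitSum (fun u e => splitSum (fun k v => M (e ++ k) * oneSub f v)
      (x ++ u)) b = 0 := properSplitSum_eq_zero fun u e hue _ => by
    have hzero : M e * wordConv M (oneSub f) (x ++ u) = 0 := by
      rw [h.wordConv_oneSub (by simp [hx]), mul_zero]
    rw [← hzero, wordConv, mul_splitSum]
    exact splitSum_congr fun k v hkv => by rw [hcut u e hue k v hkv, mul_assoc]
  rw [cyclicSum, properSplitSum_append, hcut_zero, add_zero, cyclicSum, mul_properSplitSum]
  refine properSplitSum_congr fun u t hut _ => ?_
  rw [mul_splitSum]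
  refine splitSum_congr fun k v hkv => ?_
  rw [List.append_assoc, hpeak k v t (by rw [hkv, hut]), mul_assoc]

end HasBooleanCumulants

end WordConvolution

/-! ### Boolean cumulants and the functional `[φ]` -/

section CyclicPieces

theorem ordList_succ {B : Type*} {n : ℕ} (a : Fin (n + 1) → B) (P : Fin (n + 1) → Prop)
    [DecidablePred P] :
    ordList a P = (if P 0 then [a 0] else []) ++ ordList (Fin.tail a) (fun i => P i.succ) := by
  unfold ordList
  rw [List.finRange_succ, List.filter_cons]
  by_cases h : P 0 <;> simp [h, List.filter_map, Function.comp_def, Fin.tail]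

theorem ordList_congr {B : Type*} {n : ℕ} (a : Fin n → B) {P Q : Fin n → Prop}
    [DecidablePred P] [DecidablePred Q] (h : ∀ i, P i ↔ Q i) : ordList a P = ordList a Q := by
  unfold ordList
  simp only [h]

theorem ordList_of_forall {B : Type*} {n : ℕ} (a : Fin n → B) {P : Fin n → Prop} [DecidablePred P]
    (h : ∀ i, P i) : ordList a P = List.ofFn a := by
  unfold ordList
  simp [h, List.ofFn_eq_map]

theorem sum_finset_fin_succ {M : Type*} [AddCommMonoid M] {n : ℕ}
    (f : Finset (Fin (n + 1)) → M) :
    ∑ V, f V = ∑ V : Finset (Fin n), f (V.map (Fin.succEmb n)) +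
      ∑ V : Finset (Fin n), f (insert 0 (V.map (Fin.succEmb n))) := by
  have hpowerset : ((Finset.univ : Finset (Fin n)).map (Fin.succEmb n)).powerset =
      Finset.univ.map (Finset.mapEmbedding (Fin.succEmb n)).toEmbedding := by
    ext s
    simp [Finset.subset_map_iff, eq_comm]
  have huniv : (Finset.univ : Finset (Fin (n + 1))) =
      insert 0 (Finset.univ.map (Fin.succEmb n)) := by
    rw [Fin.univ_succ, Finset.cons_eq_insert]
    rfl
  rw [← Finset.powerset_univ, huniv, Finset.sum_powerset_insert (by simp), hpowerset,
    Finset.sum_map, Finset.sum_map]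
  rfl

theorem sum_finset_eq_empty_add {ι M : Type*} [Fintype ι] [AddCommMonoid M]
    (f : Finset ι → M) : ∑ V, f V = f ∅ + ∑ V, if V.Nonempty then f V else 0 := by
  classical
  simp only [Finset.nonempty_iff_ne_empty]
  rw [← Finset.sum_filter, Finset.filter_ne', Finset.add_sum_erase _ _ (Finset.mem_univ ∅)]

variable {α R : Type*} {n : ℕ}

/-- The word read before the first element of `V`. -/
noncomputable def headWord (a : Fin n → α) (V : Finset (Fin n)) : List α :=
  ordList a fun i => ∀ v ∈ V, i < v

/-- The word read from the last element of `V` on. -/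
noncomputable def tailWord (a : Fin n → α) (V : Finset (Fin n)) : List α :=
  ordList a fun i => ∀ v ∈ V, v ≤ i

/-- The product of the values of `f` at the words cut out by consecutive elements of `V`. -/
noncomputable def innerProd [CommMonoid R] (f : List α → R) (a : Fin n → α)
    (V : Finset (Fin n)) : R :=
  (((V.sort (· ≤ ·)).zip (V.sort (· ≤ ·)).tail).map fun p =>
    f (ordList a fun i => p.1 ≤ i ∧ i < p.2)).prod

section Shift

variable (a : Fin (n + 1) → α) {V : Finset (Fin n)}

theorem sort_map_succEmb (V : Finset (Fin n)) :
    (V.map (Fin.succEmb n)).sort (· ≤ ·) = (V.sort (· ≤ ·)).map Fin.succ :=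
  (Finset.map_sort (r := (· ≤ ·)) (r' := (· ≤ ·)) (Fin.succEmb n) V (by simp)).symm

theorem sort_insert_zero_map_succEmb (V : Finset (Fin n)) :
    (insert 0 (V.map (Fin.succEmb n))).sort (· ≤ ·) = 0 :: (V.sort (· ≤ ·)).map Fin.succ := by
  rw [Finset.sort_insert, sort_map_succEmb] <;> simp

theorem headWord_map_succEmb (V : Finset (Fin n)) :
    headWord a (V.map (Fin.succEmb n)) = a 0 :: headWord (Fin.tail a) V := by
  simp [headWord, ordList_succ]

theorem headWord_insert_zero (V : Finset (Fin (n + 1))) : headWord a (insert 0 V) = [] := by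
  simp [headWord, ordList]

theorem tailWord_map_succEmb (hV : V.Nonempty) :
    tailWord a (V.map (Fin.succEmb n)) = tailWord (Fin.tail a) V := by
  simpa [tailWord, ordList_succ, Finset.Nonempty] using hV

theorem tailWord_insert_zero (hV : V.Nonempty) :
    tailWord a (insert 0 (V.map (Fin.succEmb n))) = tailWord (Fin.tail a) V := by
  simpa [tailWord, ordList_succ, Finset.Nonempty] using hV

theorem headWord_singleton_zero : headWord a {0} = [] := by
  simpa using headWord_insert_zero a ∅

theorem tailWord_singleton_zero : tailWord a {0} = List.ofFn a :=
  ordList_of_forall a (by simp)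

theorem headWord_eq_ordList_lt_of_sort_eq_cons (a : Fin n → α) {m : Fin n} {s : List (Fin n)}
    (hs : V.sort (· ≤ ·) = m :: s) : headWord a V = ordList a (· < m) := by
  have hsorted : (m :: s).Pairwise (· ≤ ·) := hs ▸ V.pairwise_sort (· ≤ ·)
  have hmem : ∀ v, v ∈ V ↔ v = m ∨ v ∈ s := fun v => by
    rw [← Finset.mem_sort (· ≤ ·), hs, List.mem_cons]
  refine ordList_congr a fun i => ⟨fun h => h m ((hmem m).2 (.inl rfl)), fun h v hv => ?_⟩
  rcases (hmem v).1 hv with rfl | hv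
  · exact h
  · exact h.trans_le (List.rel_of_pairwise_cons hsorted hv)

variable [CommMonoid R] (f : List α → R)

theorem innerProd_map_succEmb (V : Finset (Fin n)) :
    innerProd f a (V.map (Fin.succEmb n)) = innerProd f (Fin.tail a) V := by
  unfold innerProd
  rw [sort_map_succEmb, ← List.map_tail, List.zip_map, List.map_map]
  simp [Function.comp_def, ordList_succ]

theorem innerProd_singleton_zero : innerProd f a {0} = 1 := by
  simp [innerProd]

theorem innerProd_insert_zero (hV : V.Nonempty) :
    innerProd f a (insert 0 (V.map (Fin.succEmb n))) =
      f (a 0 :: headWord (Fin.tail a) V) * innerProd f (Fin.tail a) V := by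
  obtain ⟨m, s, hs⟩ := List.exists_cons_of_ne_nil (l := V.sort (· ≤ ·))
    (by simpa [← List.length_eq_zero_iff] using hV.ne_empty)
  rw [← innerProd_map_succEmb a f, headWord_eq_ordList_lt_of_sort_eq_cons _ hs, innerProd,
    innerProd, sort_insert_zero_map_succEmb, sort_map_succEmb, hs]
  simp [ordList_succ]

end Shift

section Sum

variable [CommRing R] {M f : List α → R}

theorem sum_insert_zero_innerProd_mul (f : List α → R) (K : List α → List α → R)
    (a : Fin (n + 1) → α) :
    ∑ V : Finset (Fin n), innerProd f a (insert 0 (V.map (Fin.succEmb n))) *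
        K (headWord a (insert 0 (V.map (Fin.succEmb n))))
          (tailWord a (insert 0 (V.map (Fin.succEmb n)))) =
      K [] (List.ofFn a) + ∑ V : Finset (Fin n), if V.Nonempty then
        innerProd f (Fin.tail a) V *
          (f (a 0 :: headWord (Fin.tail a) V) * K [] (tailWord (Fin.tail a) V)) else 0 := by
  rw [sum_finset_eq_empty_add]
  simp only [Finset.map_empty, headWord_insert_zero, insert_empty_eq, innerProd_singleton_zero,
    headWord_singleton_zero, tailWord_singleton_zero, one_mul]
  congr 1
  refine Finset.sum_congr rfl fun V _ => ?_
  split_ifs with hV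
  · rw [innerProd_insert_zero a f hV, tailWord_insert_zero a hV, mul_assoc, mul_left_comm]
  · rfl

theorem HasBooleanCumulants.sum_innerProd_mul (h : HasBooleanCumulants M f)
    (K : List α → List α → R) (a : Fin n → α) :
    (∑ V : Finset (Fin n), if V.Nonempty then
        innerProd f a V * K (headWord a V) (tailWord a V) else 0) =
      properSplitSum (fun u s => properSplitSum (fun v t => M v * K u t) s) (List.ofFn a) := by
  induction n generalizing K with
  | zero => simp [Finset.eq_empty_of_isEmpty]
  | succ n ih =>
    have hwithout : (∑ V : Finset (Fin n), if (V.map (Fin.succEmb n)).Nonempty then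
          innerProd f a (V.map (Fin.succEmb n)) * K (headWord a (V.map (Fin.succEmb n)))
            (tailWord a (V.map (Fin.succEmb n))) else 0) =
        ∑ V : Finset (Fin n), if V.Nonempty then innerProd f (Fin.tail a) V *
          K (a 0 :: headWord (Fin.tail a) V) (tailWord (Fin.tail a) V) else 0 :=
      Finset.sum_congr rfl fun V _ => by
        by_cases hV : V.Nonempty
        · simp [hV, headWord_map_succEmb, tailWord_map_succEmb, innerProd_map_succEmb]
        · simp [hV]
    have hassoc : properSplitSum (fun u s => properSplitSum (fun v t =>
          M v * (f (a 0 :: u) * K [] t)) s) (List.ofFn (Fin.tail a)) =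
        properSplitSum (fun w t => M (a 0 :: w) * K [] t) (List.ofFn (Fin.tail a)) := by
      simp only [properSplitSum_assoc, h.cons, splitSum_mul]
      simp only [mul_assoc, mul_left_comm]
    rw [sum_finset_fin_succ, hwithout, ih (fun u t => K (a 0 :: u) t)]
    simp only [Finset.insert_nonempty, if_true]
    rw [sum_insert_zero_innerProd_mul, ih (fun u t => f (a 0 :: u) * K [] t), hassoc,
      List.ofFn_succ, properSplitSum_cons, properSplitSum_cons, h.nil, one_mul, add_comm]
    rfl

end Sum

end CyclicPieces

section BooleanCumulants

variable {φ : A →ₗ[ℂ] ℂ} {M : List A → ℂ}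

theorem booleanAux_succ (φ : A →ₗ[ℂ] ℂ) {m : ℕ} {l : List A} (hl : l ≠ [])
    (hm : l.length ≤ m) : booleanAux φ (m + 1) l = booleanAux φ m l := by
  induction m generalizing l with
  | zero => simp_all
  | succ m ih =>
    rw [booleanAux, booleanAux]
    congr 1
    refine Finset.sum_congr rfl fun k hk => ?_
    rw [Finset.mem_range] at hk
    rw [ih (by simp [hl]) (by rw [List.length_take]; omega)]

theorem booleanAux_eq_booleanCumulant (φ : A →ₗ[ℂ] ℂ) {m : ℕ} {l : List A} (hl : l ≠ [])
    (hm : l.length ≤ m) : booleanAux φ m l = booleanCumulant φ l := by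
  induction m, hm using Nat.le_induction with
  | base => rfl
  | succ m hm ih => rw [booleanAux_succ φ hl hm, ih]

theorem booleanCumulant_cons (φ : A →ₗ[ℂ] ℂ) (a : A) (l : List A) :
    booleanCumulant φ (a :: l) = φ (a :: l).prod -
      properSplitSum (fun u v => booleanCumulant φ (a :: u) * φ v.prod) l := by
  rw [booleanCumulant, List.length_cons, booleanAux, properSplitSum]
  congr 1
  refine Finset.sum_congr rfl fun k hk => ?_
  rw [Finset.mem_range] at hk
  rw [List.take_succ_cons, booleanAux_eq_booleanCumulant φ (by simp)
    (by rw [List.length_cons, List.length_take]; omega)]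
  rfl

theorem hasBooleanCumulants_booleanCumulant (hnil : M [] = 1) (hM : ∀ l ≠ [], M l = φ l.prod) :
    HasBooleanCumulants M (booleanCumulant φ) where
  nil := hnil
  cons a l := by
    have hproper : properSplitSum (fun u v => booleanCumulant φ (a :: u) * M v) l =
        properSplitSum (fun u v => booleanCumulant φ (a :: u) * φ v.prod) l :=
      properSplitSum_congr fun u v _ hv => by rw [hM v hv]
    rw [splitSum_eq_properSplitSum_add, hproper, hnil, mul_one, booleanCumulant_cons,
      add_sub_cancel, hM _ (by simp)]

theorem HasBooleanCumulants.mkValue_eq_cyclicSum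
    (h : HasBooleanCumulants M (booleanCumulant φ)) (l : List A) :
    mkValue φ l.get = cyclicSum M (oneSub (booleanCumulant φ)) l := by
  have hswap := cyclicSum_add_swap M (oneSub (booleanCumulant φ)) l
  rw [properSplitSum_eq_zero fun x y _ hy => h.wordConv_oneSub (by simp [hy])] at hswap
  rw [eq_neg_of_add_eq_zero_left hswap, cyclicSum_oneSub_left, neg_neg]
  refine (h.sum_innerProd_mul (fun u t => booleanCumulant φ (t ++ u)) l.get).trans ?_
  simp only [cyclicSum, properSplitSum_assoc, List.ofFn_get, mul_comm]

end BooleanCumulants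

/-! ### Peaks of words -/

section Words

variable {α : Type*} {S S₁ S₂ : Set α} {u v x y : List α}

/-- Every letter of the word `l` lies in `S₁` or in `S₂`. -/
def IsMixedWord (S₁ S₂ : Set α) (l : List α) : Prop := ∀ a ∈ l, a ∈ S₁ ∪ S₂

/-- The first letter of the word `l`, if there is one, lies in `S`. -/
def StartsIn (S : Set α) (l : List α) : Prop := ∀ a ∈ l.head?, a ∈ S

/-- The last letter of the word `l`, if there is one, lies in `S`. -/
def EndsIn (S : Set α) (l : List α) : Prop := ∀ a ∈ l.getLast?, a ∈ S

/-- `l` is a nonempty word in the letters of `S₁ ∪ S₂` whose first and last letters lie in `S₁`. -/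
structure IsValleyWord (S₁ S₂ : Set α) (l : List α) : Prop where
  ne_nil : l ≠ []
  isMixedWord : IsMixedWord S₁ S₂ l
  startsIn : StartsIn S₁ l
  endsIn : EndsIn S₁ l

theorem isMixedWord_append :
    IsMixedWord S₁ S₂ (u ++ v) ↔ IsMixedWord S₁ S₂ u ∧ IsMixedWord S₁ S₂ v :=
  List.forall_mem_append

theorem StartsIn.of_append (h : StartsIn S (u ++ v)) : StartsIn S u := fun a ha =>
  h a (by simp_all)

theorem StartsIn.append (h : StartsIn S u) (hu : u ≠ []) : StartsIn S (u ++ v) := fun a ha =>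
  h a (by rwa [List.head?_append_of_ne_nil _ hu] at ha)

theorem EndsIn.of_append (h : EndsIn S (u ++ v)) : EndsIn S v := fun a ha =>
  h a (by simp_all)

theorem EndsIn.append (h : EndsIn S v) (hv : v ≠ []) : EndsIn S (u ++ v) := fun a ha =>
  h a (by rwa [List.getLast?_append_of_ne_nil _ hv] at ha)

theorem IsValleyWord.append_append (hx : IsValleyWord S₁ S₂ x) (hu : IsMixedWord S₁ S₂ u)
    (hy : IsValleyWord S₁ S₂ y) : IsValleyWord S₁ S₂ (x ++ u ++ y) where
  ne_nil := by simp [hx.ne_nil]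
  isMixedWord := isMixedWord_append.2 ⟨isMixedWord_append.2 ⟨hx.isMixedWord, hu⟩, hy.isMixedWord⟩
  startsIn := by rw [List.append_assoc]; exact hx.startsIn.append hx.ne_nil
  endsIn := hy.endsIn.append hy.ne_nil

theorem IsValleyWord.of_forall_mem (hx : x ≠ []) (h : ∀ a ∈ x, a ∈ S₁) : IsValleyWord S₁ S₂ x where
  ne_nil := hx
  isMixedWord a ha := .inl (h a ha)
  startsIn a ha := h a (List.mem_of_head? ha)
  endsIn a ha := h a (List.mem_of_getLast? ha)

end Words

section Blocks

variable {R σ : Type*} [Monoid R] [SetLike σ R] [MulMemClass σ R]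

theorem list_prod_mem_of_ne_nil {B : σ} {l : List R} (hl : l ≠ []) (h : ∀ a ∈ l, a ∈ B) :
    l.prod ∈ B := by
  induction l with
  | nil => contradiction
  | cons a l ih =>
    rcases eq_or_ne l [] with rfl | hne
    · simpa using h
    · rw [List.forall_mem_cons] at h
      simpa using mul_mem h.1 (ih hne h.2)

theorem exists_isChain_blocks {ι : Type*} (B : ι → σ) (w : List (ι × R))
    (hw : ∀ p ∈ w, p.2 ∈ B p.1) :
    ∃ m : List (ι × R), (∀ p ∈ m, p.2 ∈ B p.1) ∧ (m.IsChain fun p q => p.1 ≠ q.1) ∧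
      (m.map Prod.snd).prod = (w.map Prod.snd).prod ∧
      (m.map Prod.fst).head? = (w.map Prod.fst).head? ∧
      (m.map Prod.fst).getLast? = (w.map Prod.fst).getLast? := by
  induction w with
  | nil => exact ⟨[], by simp⟩
  | cons p w ih =>
    rw [List.forall_mem_cons] at hw
    obtain ⟨m, hmem, hchain, hprod, hhead, hlast⟩ := ih hw.2
    rcases m with _ | ⟨q, m⟩
    · have hw_nil : w = [] := by simpa using hhead.symm
      exact ⟨[p], by simp [hw_nil, hw.1]⟩
    rcases w with _ | ⟨r, w⟩
    · simp at hhead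
    rw [List.forall_mem_cons] at hmem
    simp only [List.map_cons, List.prod_cons] at hprod hlast
    by_cases hpq : p.1 = q.1
    · refine ⟨(p.1, p.2 * q.2) :: m, ?_, ?_, ?_, rfl, ?_⟩
      · exact List.forall_mem_cons.2 ⟨mul_mem hw.1 (hpq ▸ hmem.1), hmem.2⟩
      · rw [List.isChain_cons] at hchain ⊢
        rwa [hpq]
      · simp [mul_assoc, hprod]
      · simp [← hlast, hpq]
    · refine ⟨p :: q :: m, ?_, ?_, ?_, rfl, ?_⟩
      · exact List.forall_mem_cons.2 ⟨hw.1, List.forall_mem_cons.2 hmem⟩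
      · exact List.isChain_cons_cons.2 ⟨hpq, hchain⟩
      · simp [hprod]
      · simp [← hlast]

theorem IsMixedWord.exists_alternating_blocks {B₁ B₂ : σ} {x : List R}
    (hx : IsMixedWord (B₁ : Set R) B₂ x) :
    ∃ m : List (Bool × R), (∀ p ∈ m, p.2 ∈ if p.1 then (B₂ : Set R) else B₁) ∧
      (m.IsChain fun p q => p.1 ≠ q.1) ∧ (m.map Prod.snd).prod = x.prod ∧
      (StartsIn (B₁ : Set R) x → ∀ p ∈ m.head?, p.1 = false) ∧
      (EndsIn (B₁ : Set R) x → ∀ p ∈ m.getLast?, p.1 = false) := by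
  classical
  have hlabel : ∀ p ∈ x.map fun a => (decide (a ∉ B₁), a), p.2 ∈ cond p.1 B₂ B₁ := by
    rw [List.forall_mem_map]
    intro a ha
    have := hx a ha
    by_cases ha : a ∈ B₁ <;> simp_all
  obtain ⟨m, hmem, hchain, hprod, hhead, hlast⟩ :=
    exists_isChain_blocks (fun j => cond j B₂ B₁) _ hlabel
  refine ⟨m, fun p hp => ?_, hchain, by simpa [Function.comp_def] using hprod, fun hs p hp => ?_,
    fun he p hp => ?_⟩
  · have := hmem p hp
    cases hj : p.1 <;> simpa [hj] using this
  · have hp' := Option.mem_map_of_mem Prod.fst hp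
    rw [← List.head?_map, hhead, List.map_map, List.head?_map, Option.mem_map] at hp'
    obtain ⟨a, ha, hap⟩ := hp'
    simpa [← hap] using hs a ha
  · have hp' := Option.mem_map_of_mem Prod.fst hp
    rw [← List.getLast?_map, hlast, List.map_map, List.getLast?_map, Option.mem_map] at hp'
    obtain ⟨a, ha, hap⟩ := hp'
    simpa [← hap] using he a ha

end Blocks

section MonotoneIndependence

theorem ordList_ne_eq_eraseIdx {α : Type*} {n : ℕ} (a : Fin n → α) (p : Fin n) :
    (ordList a fun i => i ≠ p) = (List.ofFn a).eraseIdx p := by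
  have hfilter : (List.finRange n).filter (fun i => decide (i ≠ p)) =
      (List.finRange n).eraseIdx p := by
    rw [← List.erase_eq_eraseIdx_of_idxOf (a := p) (by simp),
      (List.nodup_finRange n).erase_eq_filter]
    exact List.filter_congr fun i _ => by simp [bne, beq_eq_decide]
  rw [ordList, hfilter, List.ofFn_eq_map, List.eraseIdx_map]

variable {φ : A →ₗ[ℂ] ℂ}

theorem IsMonotoneIndep.apply_labelled_peak {S₁ S₂ : Set A} (h : IsMonotoneIndep φ S₁ S₂)
    {m₁ m₂ : List (Bool × A)} {c : A}
    (hmem : ∀ p ∈ m₁ ++ (true, c) :: m₂, p.2 ∈ if p.1 then S₂ else S₁)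
    (hchain : (m₁ ++ (true, c) :: m₂).IsChain fun p q => p.1 ≠ q.1) :
    φ ((m₁ ++ (true, c) :: m₂).map Prod.snd).prod = φ c * φ ((m₁ ++ m₂).map Prod.snd).prod := by
  set m := m₁ ++ (true, c) :: m₂ with hm
  have hp : m₁.length < m.length := by simp [hm]
  have hget : m[m₁.length] = (true, c) := by simp [hm]
  have hfactor := h m.length (fun i => m[i].2) (fun i => m[i].1)
    ⟨fun i => hmem _ (List.getElem_mem _), fun i hi => List.isChain_iff_getElem.1 hchain i hi⟩
    ⟨m₁.length, hp⟩ (by simp [hget])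
  have hofFn : (List.ofFn fun i : Fin m.length => m[i].2) = m.map Prod.snd := by
    exact List.ofFn_getElem_eq_map m Prod.snd
  have herase : (m.map Prod.snd).eraseIdx m₁.length = (m₁ ++ m₂).map Prod.snd := by
    simp [hm, List.eraseIdx_append_of_length_le]
  rw [ordList_ne_eq_eraseIdx, hofFn, herase] at hfactor
  simpa [hget] using hfactor

variable {σ : Type*} [SetLike σ A] [MulMemClass σ A] {B₁ B₂ : σ}

theorem IsMonotoneIndep.apply_peak (h : IsMonotoneIndep φ (B₁ : Set A) B₂) {x b y : List A}
    (hx : IsMixedWord (B₁ : Set A) B₂ x) (hxe : EndsIn (B₁ : Set A) x)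
    (hbne : b ≠ []) (hb : ∀ a ∈ b, a ∈ B₂)
    (hy : IsMixedWord (B₁ : Set A) B₂ y) (hys : StartsIn (B₁ : Set A) y) :
    φ (x ++ (b ++ y)).prod = φ b.prod * φ (x ++ y).prod := by
  obtain ⟨m₁, hmem₁, hchain₁, hprod₁, -, hlast₁⟩ := hx.exists_alternating_blocks
  obtain ⟨m₂, hmem₂, hchain₂, hprod₂, hhead₂, -⟩ := hy.exists_alternating_blocks
  have hmem : ∀ p ∈ m₁ ++ (true, b.prod) :: m₂, p.2 ∈ if p.1 then (B₂ : Set A) else B₁ :=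
    List.forall_mem_append.2 ⟨hmem₁, List.forall_mem_cons.2
      ⟨list_prod_mem_of_ne_nil hbne hb, hmem₂⟩⟩
  have hchain : (m₁ ++ (true, b.prod) :: m₂).IsChain fun p q => p.1 ≠ q.1 := by
    refine List.isChain_append.2 ⟨hchain₁, List.isChain_cons.2 ⟨fun q hq => ?_, hchain₂⟩, ?_⟩
    · simp [hhead₂ hys q hq]
    · simpa using fun p hp => hlast₁ hxe p hp
  simpa [hprod₁, hprod₂] using h.apply_labelled_peak hmem hchain

theorem IsMonotoneIndep.moment_peak {M : List A → ℂ} (h : IsMonotoneIndep φ (B₁ : Set A) B₂)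
    (hnil : M [] = 1) (hM : ∀ l ≠ [], M l = φ l.prod) {x b y : List A}
    (hx : IsMixedWord (B₁ : Set A) B₂ x) (hxe : EndsIn (B₁ : Set A) x) (hb : ∀ a ∈ b, a ∈ B₂)
    (hy : IsMixedWord (B₁ : Set A) B₂ y) (hys : StartsIn (B₁ : Set A) y) :
    M (x ++ (b ++ y)) = M b * M (x ++ y) := by
  rcases eq_or_ne b [] with rfl | hbne
  · simp [hnil]
  rcases eq_or_ne (x ++ y) [] with hxy | hxy
  · obtain ⟨rfl, rfl⟩ := List.append_eq_nil_iff.1 hxy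
    simp [hnil]
  · rw [hM _ (by simp [hbne]), hM _ hbne, hM _ hxy, h.apply_peak hx hxe hbne hb hy hys]

theorem IsMonotoneIndep.cyclicSum_append_peak {M f : List A → ℂ}
    (h : IsMonotoneIndep φ (B₁ : Set A) B₂) (hMf : HasBooleanCumulants M f)
    (hM : ∀ l ≠ [], M l = φ l.prod) {x b : List A} (hx : IsValleyWord (B₁ : Set A) B₂ x)
    (hb : ∀ a ∈ b, a ∈ B₂) :
    cyclicSum M (oneSub f) (x ++ b) = M b * cyclicSum M (oneSub f) x := by
  refine hMf.cyclicSum_append_peak hx.ne_nil (fun u e hue k v hkv => ?_) fun k v t hkvt => ?_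
  · have hmixed : IsMixedWord (B₁ : Set A) B₂ (k ++ v) := by
      rw [hkv, isMixedWord_append]
      exact ⟨hx.isMixedWord, fun a ha => .inr (hb a (by simp [← hue, ha]))⟩
    have hstart : StartsIn (B₁ : Set A) (k ++ v) := hkv ▸ hx.startsIn.append hx.ne_nil
    exact h.moment_peak (x := []) hMf.nil hM (by simp [IsMixedWord]) (by simp [EndsIn])
      (fun a ha => hb a (by simp [← hue, ha])) (isMixedWord_append.1 hmixed).1 hstart.of_append
  · subst hkvt
    have hmixed := isMixedWord_append.1 hx.isMixedWord
    exact h.moment_peak hMf.nil hM hmixed.2 hx.endsIn.of_append hb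
      (isMixedWord_append.1 hmixed.1).1 hx.startsIn.of_append.of_append

end MonotoneIndependence

section AlternatingProducts

variable {R : Type*} [Monoid R]

theorem mul_prod_ofFn_mem {σ : Type*} [SetLike σ R] {V B : σ}
    (hVBV : ∀ x ∈ V, ∀ z ∈ B, ∀ y ∈ V, x * z * y ∈ V) {x : R} (hx : x ∈ V) {n : ℕ}
    {b a : Fin n → R} (hb : ∀ i, b i ∈ B) (ha : ∀ i, a i ∈ V) :
    x * (List.ofFn fun i => b i * a i).prod ∈ V := by
  induction n generalizing x with
  | zero => simpa using hx
  | succ n ih =>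
    rw [List.ofFn_succ, List.prod_cons, ← mul_assoc, ← mul_assoc]
    exact ih (hVBV x hx _ (hb 0) _ (ha 0)) (fun i => hb i.succ) fun i => ha i.succ

theorem prod_ofFn_mul_eq {n : ℕ} (a b : Fin (n + 1) → R) :
    (List.ofFn fun i => a i * b i).prod =
      a 0 * (List.ofFn fun i : Fin n => b i.castSucc * a i.succ).prod * b (Fin.last n) := by
  induction n with
  | zero => simp
  | succ n ih =>
    rw [List.ofFn_succ, List.prod_cons, ih (fun i => a i.succ) (fun i => b i.succ),
      List.ofFn_succ (n := n), List.prod_cons]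
    simp [mul_assoc]

end AlternatingProducts

section CyclicFormula

variable {σ : Type*} [SetLike σ A] [MulMemClass σ A] {ω ψ : A →ₗ[ℂ] ℂ} {V B : σ}

theorem IsTracial.apply_mul_prod_ofFn (hω : IsTracial ω)
    (hVBV : ∀ x ∈ V, ∀ z ∈ B, ∀ y ∈ V, x * z * y ∈ V)
    (hfactor : ∀ x ∈ V, ∀ z ∈ B, ω (x * z) = ψ z * ω x) {x : A} (hx : x ∈ V)
    {n : ℕ} {b a : Fin n → A} (hb : ∀ i, b i ∈ B) (ha : ∀ i, a i ∈ V) :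
    ω (x * (List.ofFn fun i => b i * a i).prod) = ω (x * (List.ofFn a).prod) * ∏ i, ψ (b i) := by
  induction n generalizing x with
  | zero => simp
  | succ n ih =>
    have hmem : (List.ofFn a).prod * x ∈ V :=
      mul_mem (list_prod_mem_of_ne_nil (by simp) (List.forall_mem_ofFn_iff.2 ha)) hx
    have hprod : (List.ofFn a).prod = a 0 * (List.ofFn fun i : Fin n => a i.succ).prod := by
      rw [List.ofFn_succ, List.prod_cons]
    calc ω (x * (List.ofFn fun i => b i * a i).prod)
        = ω (x * b 0 * a 0 * (List.ofFn fun i : Fin n => b i.succ * a i.succ).prod) := by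
          simp [List.ofFn_succ, mul_assoc]
      _ = ω (x * b 0 * (List.ofFn a).prod) * ∏ i : Fin n, ψ (b i.succ) := by
          rw [ih (hVBV x hx _ (hb 0) _ (ha 0)) (fun i => hb i.succ) fun i => ha i.succ, hprod,
            mul_assoc]
      _ = ψ (b 0) * ω (x * (List.ofFn a).prod) * ∏ i : Fin n, ψ (b i.succ) := by
          rw [hω, ← mul_assoc, hfactor _ hmem _ (hb 0), hω]
      _ = ω (x * (List.ofFn a).prod) * ∏ i, ψ (b i) := by
          rw [Fin.prod_univ_succ]
          ring

theorem IsTracial.apply_cyclic_word (hω : IsTracial ω)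
    (hVBV : ∀ x ∈ V, ∀ z ∈ B, ∀ y ∈ V, x * z * y ∈ V)
    (hfactor : ∀ x ∈ V, ∀ z ∈ B, ω (x * z) = ψ z * ω x) {n : ℕ}
    {a : Fin (n + 1) → A} {b : Fin (n + 2) → A} (ha : ∀ i, a i ∈ V) (hb : ∀ i, b i ∈ B) :
    ω (b 0 * (List.ofFn fun i => a i * b i.succ).prod) =
      ω (List.ofFn a).prod * (∏ i : Fin n, ψ (b i.castSucc.succ)) *
        ψ (b (Fin.last (n + 1)) * b 0) := by
  have hb' : ∀ i : Fin n, b i.castSucc.succ ∈ B := fun i => hb _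
  have ha' : ∀ i : Fin n, a i.succ ∈ V := fun i => ha _
  rw [prod_ofFn_mul_eq a fun i => b i.succ, hω, mul_assoc,
    hfactor _ (mul_prod_ofFn_mem hVBV (ha 0) hb' ha') _ (mul_mem (hb _) (hb _)),
    hω.apply_mul_prod_ofFn hVBV hfactor (ha 0) hb' ha', List.ofFn_succ (f := a),
    List.prod_cons, Fin.succ_last]
  ring

end CyclicFormula

/-! ### The tensor algebra -/

section TensorAlgebra

/-- The pure tensor `a₁ ⊗ ⋯ ⊗ aₙ` of the letters of the word `l = [a₁, …, aₙ]`. -/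
noncomputable def pureTensor (l : List A) : TensorAlgebra ℂ A :=
  (l.map fun x => TensorAlgebra.ι ℂ x).prod

/-- The linear span of the pure tensors of the words in `W`. -/
noncomputable def wordSpan (W : Set (List A)) : Submodule ℂ (TensorAlgebra ℂ A) :=
  Submodule.span ℂ (Set.image pureTensor W)

/-- The non-unital subalgebra `T₀(S)` of the tensor algebra generated by `S`. -/
noncomputable abbrev tensorSubalgebra (S : Set A) : NonUnitalSubalgebra ℂ (TensorAlgebra ℂ A) :=
  NonUnitalAlgebra.adjoin ℂ ((fun x => TensorAlgebra.ι ℂ x) '' S)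

@[simp]
theorem pureTensor_nil : pureTensor ([] : List A) = 1 := rfl

@[simp]
theorem pureTensor_singleton (a : A) : pureTensor [a] = TensorAlgebra.ι ℂ a := by
  simp [pureTensor]

theorem pureTensor_append (u v : List A) :
    pureTensor (u ++ v) = pureTensor u * pureTensor v := by
  simp [pureTensor]

theorem pureTensor_mem_wordSpan {W : Set (List A)} {l : List A} (hl : l ∈ W) :
    pureTensor l ∈ wordSpan W :=
  Submodule.subset_span (Set.mem_image_of_mem _ hl)

theorem wordSpan_mono {W W' : Set (List A)} (h : W ⊆ W') : wordSpan W ≤ wordSpan W' :=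
  Submodule.span_mono (Set.image_mono h)

theorem mul_mem_wordSpan {U V W : Set (List A)} (h : ∀ u ∈ U, ∀ v ∈ V, u ++ v ∈ W)
    {x y : TensorAlgebra ℂ A} (hx : x ∈ wordSpan U) (hy : y ∈ wordSpan V) :
    x * y ∈ wordSpan W := by
  have hxy := Submodule.mul_mem_mul hx hy
  rw [wordSpan, wordSpan, Submodule.span_mul_span] at hxy
  refine Submodule.span_mono ?_ hxy
  rintro _ ⟨_, ⟨u, hu, rfl⟩, _, ⟨v, hv, rfl⟩, rfl⟩
  exact ⟨u ++ v, h u hu v hv, pureTensor_append u v⟩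

theorem mem_wordSpan_univ (x : TensorAlgebra ℂ A) : x ∈ wordSpan Set.univ := by
  induction x using TensorAlgebra.induction with
  | algebraMap r =>
    rw [Algebra.algebraMap_eq_smul_one, ← pureTensor_nil]
    exact Submodule.smul_mem _ _ (pureTensor_mem_wordSpan trivial)
  | ι a =>
    rw [← pureTensor_singleton]
    exact pureTensor_mem_wordSpan trivial
  | mul x y hx hy => exact mul_mem_wordSpan (fun _ _ _ _ => Set.mem_univ _) hx hy
  | add x y hx hy => exact add_mem hx hy

theorem mem_wordSpan_of_mem_tensorSubalgebra {S : Set A} {x : TensorAlgebra ℂ A}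
    (hx : x ∈ tensorSubalgebra S) : x ∈ wordSpan {l | l ≠ [] ∧ ∀ a ∈ l, a ∈ S} := by
  induction hx using NonUnitalAlgebra.adjoin_induction with
  | mem x hx =>
    obtain ⟨a, ha, rfl⟩ := hx
    beta_reduce
    rw [← pureTensor_singleton]
    exact pureTensor_mem_wordSpan ⟨by simp, by simpa using ha⟩
  | zero => exact zero_mem _
  | add x y _ _ hx hy => exact add_mem hx hy
  | mul x y _ _ hx hy =>
    refine mul_mem_wordSpan ?_ hx hy
    rintro u ⟨hu_ne, hu⟩ v ⟨-, hv⟩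
    exact ⟨by simp [hu_ne], List.forall_mem_append.2 ⟨hu, hv⟩⟩
  | smul r x _ hx => exact Submodule.smul_mem _ r hx

theorem bilin_eq_of_mem_wordSpan {f g : TensorAlgebra ℂ A →ₗ[ℂ] TensorAlgebra ℂ A →ₗ[ℂ] ℂ}
    {U V : Set (List A)}
    (h : ∀ u ∈ U, ∀ v ∈ V, f (pureTensor u) (pureTensor v) = g (pureTensor u) (pureTensor v))
    {x y : TensorAlgebra ℂ A} (hx : x ∈ wordSpan U) (hy : y ∈ wordSpan V) : f x y = g x y := by
  have hleft : ∀ u ∈ U, f (pureTensor u) y = g (pureTensor u) y := fun u hu =>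
    LinearMap.eqOn_span (by rintro _ ⟨v, hv, rfl⟩; exact h u hu v hv) hy
  exact LinearMap.eqOn_span (f := f.flip y) (g := g.flip y)
    (by rintro _ ⟨u, hu, rfl⟩; exact hleft u hu) hx

theorem isTracial_of_pureTensor {ω : TensorAlgebra ℂ A →ₗ[ℂ] ℂ}
    (h : ∀ u v, ω (pureTensor (u ++ v)) = ω (pureTensor (v ++ u))) : IsTracial ω := fun x y =>
  bilin_eq_of_mem_wordSpan (f := (LinearMap.mul ℂ (TensorAlgebra ℂ A)).compr₂ ω)
    (g := (LinearMap.mul ℂ (TensorAlgebra ℂ A)).flip.compr₂ ω)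
    (fun u _ v _ => by simpa [pureTensor_append] using h u v)
    (mem_wordSpan_univ x) (mem_wordSpan_univ y)

theorem apply_mul_eq_of_mem_wordSpan {ω ψ : TensorAlgebra ℂ A →ₗ[ℂ] ℂ} {U V : Set (List A)}
    (h : ∀ u ∈ U, ∀ v ∈ V,
      ω (pureTensor (u ++ v)) = ψ (pureTensor v) * ω (pureTensor u))
    {x z : TensorAlgebra ℂ A} (hx : x ∈ wordSpan U) (hz : z ∈ wordSpan V) :
    ω (x * z) = ψ z * ω x :=
  bilin_eq_of_mem_wordSpan (f := (LinearMap.mul ℂ (TensorAlgebra ℂ A)).compr₂ ω)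
    (g := (LinearMap.mul ℂ ℂ).flip.compl₁₂ ω ψ)
    (fun u hu v hv => by simpa [pureTensor_append, mul_comm] using h u hu v hv) hx hz

/-- The algebra spanned by the pure tensors of nonempty words in `S₁ ∪ S₂` which start and end in
`S₁`; these are the elements next to which a factor from `T₀(S₂)` is a cyclic peak. -/
noncomputable def valleySubalgebra (S₁ S₂ : Set A) : NonUnitalSubalgebra ℂ (TensorAlgebra ℂ A) :=
  (wordSpan {l | IsValleyWord S₁ S₂ l}).toNonUnitalSubalgebra fun _ _ =>
    mul_mem_wordSpan fun u hu v hv => by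
      simpa using hu.append_append (u := []) (by simp [IsMixedWord]) hv

theorem tensorSubalgebra_le_valleySubalgebra (S₁ S₂ : Set A) :
    tensorSubalgebra S₁ ≤ valleySubalgebra S₁ S₂ := fun _ hx =>
  wordSpan_mono (fun _ hl => IsValleyWord.of_forall_mem hl.1 hl.2)
    (mem_wordSpan_of_mem_tensorSubalgebra hx)

theorem mul_mul_mem_valleySubalgebra {S₁ S₂ : Set A} {x z y : TensorAlgebra ℂ A}
    (hx : x ∈ valleySubalgebra S₁ S₂) (hz : z ∈ tensorSubalgebra S₂)
    (hy : y ∈ valleySubalgebra S₁ S₂) : x * z * y ∈ valleySubalgebra S₁ S₂ := by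
  have hxz := mul_mem_wordSpan (fun u hu v hv => Set.mem_image2_of_mem hu hv) hx
    (mem_wordSpan_of_mem_tensorSubalgebra hz)
  refine mul_mem_wordSpan ?_ hxz hy
  rintro _ ⟨u, hu, b, hb, rfl⟩ v hv
  exact hu.append_append (fun c hc => .inr (hb.2 c hc)) hv

end TensorAlgebra

section Extensions

variable {φ : A →ₗ[ℂ] ℂ} {φT ω : TensorAlgebra ℂ A →ₗ[ℂ] ℂ}

theorem ExtendsTo.hasBooleanCumulants (hφT : ExtendsTo φ φT) (hφT1 : φT 1 = 1) :
    HasBooleanCumulants (fun l => φT (pureTensor l)) (booleanCumulant φ) :=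
  hasBooleanCumulants_booleanCumulant hφT1 hφT

theorem ExtendsTo.apply_eq_cyclicSum (hφT : ExtendsTo φ φT) (hφT1 : φT 1 = 1)
    (hω : ∀ l ≠ [], ω (pureTensor l) = mkValue φ l.get) {l : List A} (hl : l ≠ []) :
    ω (pureTensor l) = cyclicSum (fun l => φT (pureTensor l)) (oneSub (booleanCumulant φ)) l := by
  rw [hω l hl, (hφT.hasBooleanCumulants hφT1).mkValue_eq_cyclicSum]

theorem ExtendsTo.isTracial (hφT : ExtendsTo φ φT) (hφT1 : φT 1 = 1)
    (hω : ∀ l ≠ [], ω (pureTensor l) = mkValue φ l.get) : IsTracial ω := by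
  refine isTracial_of_pureTensor fun u v => ?_
  rcases eq_or_ne u [] with rfl | hu
  · simp
  · rw [hφT.apply_eq_cyclicSum hφT1 hω (by simp [hu]),
      hφT.apply_eq_cyclicSum hφT1 hω (by simp [hu]),
      (hφT.hasBooleanCumulants hφT1).cyclicSum_append_comm]

theorem IsMonotoneIndep.apply_mul_of_mem_valleySubalgebra {A₁ A₂ : NonUnitalSubalgebra ℂ A}
    (h : IsMonotoneIndep φ (A₁ : Set A) A₂) (hφT : ExtendsTo φ φT) (hφT1 : φT 1 = 1)
    (hω : ∀ l ≠ [], ω (pureTensor l) = mkValue φ l.get) {x z : TensorAlgebra ℂ A}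
    (hx : x ∈ valleySubalgebra (A₁ : Set A) A₂) (hz : z ∈ tensorSubalgebra (A₂ : Set A)) :
    ω (x * z) = φT z * ω x := by
  refine apply_mul_eq_of_mem_wordSpan (fun u hu v hv => ?_) hx
    (mem_wordSpan_of_mem_tensorSubalgebra hz)
  rw [hφT.apply_eq_cyclicSum hφT1 hω (by simp [hu.ne_nil]),
    hφT.apply_eq_cyclicSum hφT1 hω hu.ne_nil,
    h.cyclicSum_append_peak (hφT.hasBooleanCumulants hφT1) hφT hu hv.2]

/-- The multiplication map `T(A) → A`, `a₁ ⊗ ⋯ ⊗ aₙ ↦ a₁ ⋯ aₙ`. -/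
noncomputable def tensorMul : TensorAlgebra ℂ A →ₐ[ℂ] A :=
  TensorAlgebra.lift ℂ LinearMap.id

theorem tensorMul_pureTensor (l : List A) : tensorMul (pureTensor l) = l.prod := by
  simp [tensorMul, pureTensor, map_list_prod, Function.comp_def]

theorem tensorMul_mem {B : NonUnitalSubalgebra ℂ A} {x : TensorAlgebra ℂ A}
    (hx : x ∈ tensorSubalgebra (B : Set A)) : tensorMul x ∈ B := by
  have hle : tensorSubalgebra (B : Set A) ≤ B.comap (tensorMul (A := A)) := by
    refine NonUnitalAlgebra.adjoin_le ?_
    rintro _ ⟨a, ha, rfl⟩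
    simpa [tensorMul] using ha
  exact hle hx

theorem ExtendsTo.apply_of_mem_tensorSubalgebra (hφT : ExtendsTo φ φT) {S : Set A}
    {x : TensorAlgebra ℂ A} (hx : x ∈ tensorSubalgebra S) : φT x = φ (tensorMul x) := by
  refine LinearMap.eqOn_span (f := φT) (g := φ ∘ₗ tensorMul.toLinearMap) ?_
    (mem_wordSpan_of_mem_tensorSubalgebra hx)
  rintro _ ⟨w, hw, rfl⟩
  exact (hφT w hw.1).trans (congrArg φ (tensorMul_pureTensor w).symm)

theorem IsMonotoneIndep.tensorAlgebra {A₁ A₂ : NonUnitalSubalgebra ℂ A}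
    (h : IsMonotoneIndep φ (A₁ : Set A) A₂) (hφT : ExtendsTo φ φT) (hφT1 : φT 1 = 1) :
    IsMonotoneIndep φT (tensorSubalgebra (A₁ : Set A) : Set (TensorAlgebra ℂ A))
      (tensorSubalgebra (A₂ : Set A)) := by
  rintro n a j ⟨hmem, hne⟩ p hp
  have hmem_univ : ∀ i, a i ∈ tensorSubalgebra (Set.univ : Set A) := fun i => by
    have hi := hmem i
    split_ifs at hi <;>
      exact NonUnitalAlgebra.adjoin_mono (Set.image_mono (Set.subset_univ _)) hi
  have happly : ∀ l ≠ [], (∀ x ∈ l, x ∈ List.ofFn a) →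
      φT l.prod = φ (l.map tensorMul).prod := fun l hl hla => by
    rw [← map_list_prod]
    refine hφT.apply_of_mem_tensorSubalgebra (S := Set.univ)
      (list_prod_mem_of_ne_nil hl fun x hx => ?_)
    obtain ⟨i, rfl⟩ := List.mem_ofFn.1 (hla x hx)
    exact hmem_univ i
  have halt : Alternates (A₁ : Set A) A₂ (fun i => tensorMul (a i)) j := by
    refine ⟨fun i => ?_, hne⟩
    have hi := hmem i
    split_ifs at hi ⊢ <;> exact tensorMul_mem hi
  have hpeak := h n _ j halt p hp
  rw [ordList_ne_eq_eraseIdx] at hpeak ⊢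
  rw [show (fun i => tensorMul (a i)) = tensorMul ∘ a from rfl, ← List.map_ofFn] at hpeak
  rcases eq_or_ne n 1 with rfl | hn
  · obtain rfl := Subsingleton.elim p 0
    simp [hφT1]
  · have hlen : ((List.ofFn a).eraseIdx p).length = n - 1 := by simp [List.length_eraseIdx]
    have herase : (List.ofFn a).eraseIdx p ≠ [] :=
      List.ne_nil_of_length_pos (by have := p.pos; omega)
    rw [happly _ (by simp [p.pos.ne']) (fun _ => id), hpeak, List.eraseIdx_map,
      hφT.apply_of_mem_tensorSubalgebra (hmem_univ p),
      happly _ herase fun _ => List.mem_of_mem_eraseIdx]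

end Extensions

/-- monotone independence of `A₁` from `A₂` with respect to `φ` implies
cyclic monotone independence of `T₀(A₁)` and `T₀(A₂)` with respect to `(φ, [φ])`. -/
theorem monotoneIndep_implies_cycMonotoneIndep_tensorAlgebra
    {A : Type*} [Ring A] [Algebra ℂ A]
    (φ : A →ₗ[ℂ] ℂ)
    (A₁ A₂ : NonUnitalSubalgebra ℂ A)
    (hmono : IsMonotoneIndep φ (A₁ : Set A) (A₂ : Set A))
    -- the canonical extension of `φ` to `T(A)` (unital, as required)
    (φT : TensorAlgebra ℂ A →ₗ[ℂ] ℂ) (hφT1 : φT 1 = 1) (hφT : ExtendsTo φ φT)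
    -- the functional `[φ]` on `T(A)`
    (brφ : TensorAlgebra ℂ A →ₗ[ℂ] ℂ) (hbrφ1 : brφ 1 = 1)
    (hbrφ : ∀ l : List A, l ≠ [] →
      brφ (l.map fun x => TensorAlgebra.ι ℂ x).prod = mkValue φ l.get) :
    IsCycMonotoneIndep φT brφ
      (↑(NonUnitalAlgebra.adjoin ℂ ((fun x => TensorAlgebra.ι ℂ x) '' (A₁ : Set A))) :
        Set (TensorAlgebra ℂ A))
      (↑(NonUnitalAlgebra.adjoin ℂ ((fun x => TensorAlgebra.ι ℂ x) '' (A₂ : Set A))) :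
        Set (TensorAlgebra ℂ A)) := by
  refine ⟨hmono.tensorAlgebra hφT hφT1, fun n a b hn ha hb => ?_⟩
  obtain ⟨n, rfl⟩ := Nat.exists_eq_add_of_le' hn
  rw [(hφT.isTracial hφT1 hbrφ).apply_cyclic_word
      (fun _ hx _ hz _ hy => mul_mul_mem_valleySubalgebra hx hz hy)
      (fun _ hx _ hz => hmono.apply_mul_of_mem_valleySubalgebra hφT hφT1 hbrφ hx hz)
      (fun i => tensorSubalgebra_le_valleySubalgebra _ _ (ha i)) hb,
    Fin.prod_univ_succ, Fin.prod_univ_castSucc]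
  simp

end NCProb
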